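/- Let m_1,…,m_n ∈ ℕ^d, let s_1,…,s_n ∈ ℕ, set m = s_1m_1 + ⋯ + s_nm_n, and let ℓ be a positive integer with ℓ ≤ s_1 + ⋯ + s_n such that gcd(ℓ, m_j) = 1 for some component m_j of m. Then for every k ∈ ℕ the Hilbert functions of the tangent cones satisfy H_{(I_{S_{ℓ,m}})*}(k) = Σ_{i=0}^{min(k,ℓ−1)} H_{I_S*}(k−i). -/

import Mathlib

open MvPolynomial

/-- `f*`: the nonzero homogeneous component of `f` of smallest total degree. -/
noncomputable def lowestForm {K : Type*} [CommSemiring K] {σ : Type*}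
    (f : MvPolynomial σ K) : MvPolynomial σ K :=
  homogeneousComponent (sInf {i : ℕ | homogeneousComponent i f ≠ 0}) f

/-- `I*`: the ideal of the tangent cone at the origin, generated by the
lowest-degree forms `f*` of the nonzero elements `f ∈ I`. -/
noncomputable def tangentConeIdeal {K : Type*} [CommSemiring K] {σ : Type*}
    (I : Ideal (MvPolynomial σ K)) : Ideal (MvPolynomial σ K) :=
  Ideal.span {g | ∃ f ∈ I, f ≠ 0 ∧ g = lowestForm f}

/-- The Hilbert function of `P/J` for an ideal `J` of a polynomial ring `P`:
`H_J(k) = dim_K P_k − dim_K (J ∩ P_k)`. -/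
noncomputable def hilbertFn {K : Type*} [Field K] {σ : Type*}
    (J : Ideal (MvPolynomial σ K)) (k : ℕ) : ℕ :=
  Module.finrank K (homogeneousSubmodule σ K k) -
    Module.finrank K
      (Submodule.restrictScalars K J ⊓ homogeneousSubmodule σ K k :
        Submodule K (MvPolynomial σ K))

/-!
Write `P` and `P[y]` for the two polynomial rings, `I` and `J` for the two toric ideals, and `𝔪` and
`𝔫` for the ideals generated by the variables. A form of degree `k` lies in `I*` if and only if it
lies in `I + 𝔪 ^ (k + 1)`, so the Hilbert function of `P/I*` is the difference function of
`k ↦ dim P/(I + 𝔪 ^ k)`. It remains to compare these dimensions for `I` and `J`.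

Let `p` be the product of the `x_i ^ s_i`. The relation `y ^ ℓ - p ∈ J` and the coprimality of `ℓ`
with a component of `m` make `P[y]/J` a free module over `P/I` with basis `1, y, …, y ^ (ℓ - 1)`.
As `ℓ ≤ s_1 + ⋯ + s_n`, we have `p ∈ 𝔪 ^ ℓ`, hence in this basis the powers of `𝔫` have components
the powers of `𝔪`, shifted by the exponent of `y`. Therefore
`P[y]/(J + 𝔫 ^ k) ≅ ∏_{r < ℓ} P/(I + 𝔪 ^ (k - r))`.
-/

section LinearAlgebra

theorem finrank_quotient_eq_finrank_quotient_sup_add {K V : Type*} [DivisionRing K] [AddCommGroup V]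
    [Module K V] (N W : Submodule K V) [Module.Finite K (V ⧸ N)] [Module.Finite K W] :
    Module.finrank K (V ⧸ N) = Module.finrank K (V ⧸ N ⊔ W) +
      (Module.finrank K W - Module.finrank K (N ⊓ W : Submodule K V)) := by
  have image : (N ⊔ W).map N.mkQ = LinearMap.range (N.mkQ.domRestrict W) := by
    rw [Submodule.map_sup, N.mkQ_map_self, bot_sup_eq, LinearMap.range_domRestrict]
  have quotient : Module.finrank K ((V ⧸ N) ⧸ (N ⊔ W).map N.mkQ) = Module.finrank K (V ⧸ N ⊔ W) :=
    (Submodule.quotientQuotientEquivQuotient N (N ⊔ W) le_sup_left).finrank_eq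
  have kernel : Module.finrank K (LinearMap.ker (N.mkQ.domRestrict W)) =
      Module.finrank K (N ⊓ W : Submodule K V) := by
    rw [LinearMap.ker_domRestrict, Submodule.ker_mkQ, ← Submodule.finrank_map_subtype_eq,
      Submodule.map_comap_subtype, inf_comm]
  have third_iso := Submodule.finrank_quotient_add_finrank ((N ⊔ W).map N.mkQ)
  have rank_nullity := LinearMap.finrank_range_add_finrank_ker (N.mkQ.domRestrict W)
  rw [quotient, image] at third_iso
  omega

theorem finrank_quotient_eq_sum_of_comap_eq_pi {K V ι : Type*} [Field K] [AddCommGroup V]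
    [Module K V] [Fintype ι] {W : ι → Type*} [∀ i, AddCommGroup (W i)] [∀ i, Module K (W i)]
    (N : Submodule K V) (p : ∀ i, Submodule K (W i)) [∀ i, Module.Finite K (W i ⧸ p i)]
    (f : (∀ i, W i) →ₗ[K] V) (hsup : N ⊔ LinearMap.range f = ⊤)
    (hcomap : N.comap f = Submodule.pi Set.univ p) :
    Module.finrank K (V ⧸ N) = ∑ i, Module.finrank K (W i ⧸ p i) := by
  classical
  have surj : LinearMap.range (N.mkQ ∘ₗ f) = ⊤ := by
    rw [LinearMap.range_comp, ← bot_sup_eq (Submodule.map _ _), ← N.mkQ_map_self,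
      ← Submodule.map_sup, hsup, Submodule.map_top, N.range_mkQ]
  have ker_eq : LinearMap.ker (N.mkQ ∘ₗ f) = Submodule.pi Set.univ p := by
    rw [LinearMap.ker_comp, N.ker_mkQ, hcomap]
  rw [← Module.finrank_pi_fintype, ← (Submodule.quotientPi p).finrank_eq, ← ker_eq,
    ((N.mkQ ∘ₗ f).quotKerEquivOfSurjective (LinearMap.range_eq_top.1 surj)).finrank_eq]

end LinearAlgebra

section PowIdealOfVars

variable {σ R : Type*}

theorem mem_pow_idealOfVars_iff_homogeneousComponent [CommSemiring R] {k : ℕ}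
    {f : MvPolynomial σ R} :
    f ∈ idealOfVars σ R ^ k ↔ ∀ i < k, homogeneousComponent i f = 0 := by
  rw [mem_pow_idealOfVars_iff']
  constructor
  · intro h i hi
    ext x
    rw [coeff_homogeneousComponent, coeff_zero]
    split_ifs with hx
    · exact h x (hx ▸ hi)
    · rfl
  · intro h x hx
    simpa [coeff_homogeneousComponent] using congrArg (coeff x) (h _ hx)

theorem mem_pow_idealOfVars_of_isHomogeneous [CommSemiring R] {k : ℕ} {f : MvPolynomial σ R}
    (hf : f.IsHomogeneous k) : f ∈ idealOfVars σ R ^ k :=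
  mem_pow_idealOfVars_iff_homogeneousComponent.2 fun i hi => by
    rw [homogeneousComponent_of_mem hf, if_neg hi.ne]

theorem sub_homogeneousComponent_mem_pow_idealOfVars [CommRing R] {k : ℕ} {f : MvPolynomial σ R}
    (hf : f ∈ idealOfVars σ R ^ k) : f - homogeneousComponent k f ∈ idealOfVars σ R ^ (k + 1) := by
  rw [mem_pow_idealOfVars_iff_homogeneousComponent] at hf ⊢
  intro i hi
  rw [map_sub, homogeneousComponent_of_mem (homogeneousComponent_mem k f)]
  split_ifs with hik
  · rw [hik, sub_self]
  · rw [hf i (by omega), sub_zero]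

theorem rename_mem_pow_idealOfVars [CommSemiring R] {τ : Type*} (e : σ → τ) {k : ℕ}
    {f : MvPolynomial σ R} (hf : f ∈ idealOfVars σ R ^ k) :
    rename e f ∈ idealOfVars τ R ^ k := by
  have map_le : (idealOfVars σ R).map (rename e : MvPolynomial σ R →ₐ[R] _) ≤ idealOfVars τ R := by
    rw [Ideal.map_span, Ideal.span_le]
    rintro _ ⟨_, ⟨i, rfl⟩, rfl⟩
    exact Ideal.subset_span ⟨e i, (rename_X e i).symm⟩
  have mem_map := Ideal.mem_map_of_mem (rename e : MvPolynomial σ R →ₐ[R] _) hf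
  rw [Ideal.map_pow] at mem_map
  exact Ideal.pow_right_mono map_le k mem_map

attribute [local instance] MvPolynomial.gradedAlgebra in
theorem homogeneousComponent_mul_of_isHomogeneous [CommSemiring R] {i : ℕ} {p : MvPolynomial σ R}
    (hp : p.IsHomogeneous i) (f : MvPolynomial σ R) (k : ℕ) :
    homogeneousComponent k (p * f) = if i ≤ k then p * homogeneousComponent (k - i) f else 0 := by
  simpa only [DirectSum.decompose, Equiv.coe_fn_mk, decomposition.decompose'_apply] using
    DirectSum.coe_decompose_mul_of_left_mem (homogeneousSubmodule σ R) k (b := f) hp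

theorem finite_quotient_pow_idealOfVars (σ R : Type*) [CommRing R] [IsNoetherianRing R] [Finite σ]
    (k : ℕ) :
    Module.Finite R (MvPolynomial σ R ⧸ (idealOfVars σ R ^ k).restrictScalars R) := by
  have (i : ℕ) : Module.Finite R (homogeneousSubmodule σ R i) :=
    .of_fg (homogeneousSubmodule_fg σ R i)
  let components : MvPolynomial σ R →ₗ[R] (i : Fin k) → homogeneousSubmodule σ R i :=
    .pi fun i => (homogeneousComponent i).codRestrict _ (homogeneousComponent_mem _)
  have ker_eq : LinearMap.ker components = (idealOfVars σ R ^ k).restrictScalars R := by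
    ext f
    simp only [LinearMap.mem_ker, components, funext_iff, LinearMap.pi_apply, Subtype.ext_iff,
      LinearMap.codRestrict_apply, Pi.zero_apply, ZeroMemClass.coe_zero, Fin.forall_iff,
      Submodule.restrictScalars_mem, mem_pow_idealOfVars_iff_homogeneousComponent]
  exact ker_eq ▸ Submodule.CoFG.ker components

end PowIdealOfVars

section TangentCone

variable {σ K : Type*}

theorem lowestForm_eq_homogeneousComponent [CommSemiring K] {k : ℕ} {f : MvPolynomial σ K}
    (hf : f ∈ idealOfVars σ K ^ k) (hk : homogeneousComponent k f ≠ 0) :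
    lowestForm f = homogeneousComponent k f := by
  have order_eq : sInf {i | homogeneousComponent i f ≠ 0} = k :=
    IsLeast.csInf_eq ⟨hk, fun i hi => not_lt.1 fun hik =>
      hi (mem_pow_idealOfVars_iff_homogeneousComponent.1 hf i hik)⟩
  rw [lowestForm, order_eq]

theorem exists_mem_pow_idealOfVars_and_lowestForm_eq [CommSemiring K] (f : MvPolynomial σ K) :
    ∃ k, f ∈ idealOfVars σ K ^ k ∧ lowestForm f = homogeneousComponent k f :=
  ⟨_, mem_pow_idealOfVars_iff_homogeneousComponent.2 fun _ hi =>
    not_not.1 (Nat.notMem_of_lt_sInf hi), rfl⟩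

theorem homogeneousComponent_lowestForm_mem_sup [CommRing K] {I : Ideal (MvPolynomial σ K)}
    {f : MvPolynomial σ K} (hf : f ∈ I) (k : ℕ) :
    homogeneousComponent k (lowestForm f) ∈ I ⊔ idealOfVars σ K ^ (k + 1) := by
  obtain ⟨i, hi, lowestForm_eq⟩ := exists_mem_pow_idealOfVars_and_lowestForm_eq f
  rw [lowestForm_eq, homogeneousComponent_of_mem (homogeneousComponent_mem i f)]
  split_ifs with hki
  · subst hki
    rw [← sub_sub_cancel f (homogeneousComponent k f)]
    exact sub_mem (Ideal.mem_sup_left hf)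
      (Ideal.mem_sup_right (sub_homogeneousComponent_mem_pow_idealOfVars hi))
  · exact zero_mem _

theorem homogeneousComponent_mul_mem_sup [CommSemiring K] {I : Ideal (MvPolynomial σ K)}
    {f : MvPolynomial σ K}
    (hf : ∀ k, homogeneousComponent k f ∈ I ⊔ idealOfVars σ K ^ (k + 1))
    (a : MvPolynomial σ K) (k : ℕ) :
    homogeneousComponent k (a * f) ∈ I ⊔ idealOfVars σ K ^ (k + 1) := by
  induction a using MvPolynomial.induction_on' with
  | monomial d c =>
    have monomial_homogeneous : (monomial d c).IsHomogeneous d.degree :=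
      isHomogeneous_monomial c rfl
    rw [homogeneousComponent_mul_of_isHomogeneous monomial_homogeneous]
    split_ifs with hdk
    · have mul_mem := Ideal.mul_mem_mul
        (mem_pow_idealOfVars_of_isHomogeneous monomial_homogeneous) (hf (k - d.degree))
      rw [Ideal.mul_sup, ← pow_add, show d.degree + (k - d.degree + 1) = k + 1 by omega] at mul_mem
      exact SetLike.le_def.1 (sup_le_sup_right Ideal.mul_le_right _) mul_mem
    · exact zero_mem _
  | add a b ha hb =>
    rw [add_mul, map_add]
    exact add_mem ha hb

theorem homogeneousComponent_mem_sup_of_mem_tangentConeIdeal [CommRing K]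
    {I : Ideal (MvPolynomial σ K)} {f : MvPolynomial σ K} (hf : f ∈ tangentConeIdeal I) (k : ℕ) :
    homogeneousComponent k f ∈ I ⊔ idealOfVars σ K ^ (k + 1) := by
  induction hf using Submodule.span_induction generalizing k with
  | mem _ hx =>
    obtain ⟨f, hf, _, rfl⟩ := hx
    exact homogeneousComponent_lowestForm_mem_sup hf k
  | zero => simp only [map_zero, zero_mem]
  | add f g _ _ hf hg => simpa only [map_add] using add_mem (hf k) (hg k)
  | smul a f _ hf => exact homogeneousComponent_mul_mem_sup hf a k

theorem mem_tangentConeIdeal_iff_of_isHomogeneous [CommRing K] {I : Ideal (MvPolynomial σ K)}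
    {k : ℕ} {g : MvPolynomial σ K} (hg : g.IsHomogeneous k) :
    g ∈ tangentConeIdeal I ↔ g ∈ I ⊔ idealOfVars σ K ^ (k + 1) := by
  constructor
  · intro h
    simpa only [homogeneousComponent_eq_self hg] using
      homogeneousComponent_mem_sup_of_mem_tangentConeIdeal h k
  · intro h
    by_cases hg0 : g = 0
    · exact hg0 ▸ zero_mem _
    obtain ⟨f, hf, b, hb, rfl⟩ := Submodule.mem_sup.1 h
    have component_b : homogeneousComponent k b = 0 :=
      mem_pow_idealOfVars_iff_homogeneousComponent.1 hb k k.lt_succ_self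
    have component_f : homogeneousComponent k f = f + b := by
      simpa only [map_add, component_b, add_zero] using homogeneousComponent_eq_self hg
    have f_mem : f ∈ idealOfVars σ K ^ k := by
      rw [← add_sub_cancel_right f b]
      exact sub_mem (mem_pow_idealOfVars_of_isHomogeneous hg)
        (Ideal.pow_le_pow_right k.le_succ hb)
    refine Ideal.subset_span ⟨f, hf, ?_, ?_⟩
    · rintro rfl
      exact hg0 (by rw [← component_f, map_zero])
    · rw [lowestForm_eq_homogeneousComponent f_mem (component_f ▸ hg0), component_f]

theorem sup_pow_succ_sup_homogeneousSubmodule [CommRing K] (I : Ideal (MvPolynomial σ K)) (k : ℕ) :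
    (I ⊔ idealOfVars σ K ^ (k + 1)).restrictScalars K ⊔ homogeneousSubmodule σ K k =
      (I ⊔ idealOfVars σ K ^ k).restrictScalars K := by
  apply le_antisymm
  · refine sup_le (Submodule.restrictScalars_mono K
      (sup_le_sup_left (Ideal.pow_le_pow_right k.le_succ) I)) fun f hf => ?_
    exact Ideal.mem_sup_right (mem_pow_idealOfVars_of_isHomogeneous hf)
  · intro f hf
    obtain ⟨a, ha, b, hb, rfl⟩ := Submodule.mem_sup.1 hf
    refine Submodule.mem_sup.2 ⟨a + (b - homogeneousComponent k b), ?_, homogeneousComponent k b,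
      homogeneousComponent_mem k b, by ring⟩
    exact add_mem (Ideal.mem_sup_left ha)
      (Ideal.mem_sup_right (sub_homogeneousComponent_mem_pow_idealOfVars hb))

end TangentCone

section HilbertSamuel

variable {σ K : Type*} [Field K]

/-- The Hilbert-Samuel function `k ↦ dim_K P/(I + 𝔪 ^ k)` of `P/I` at the origin, where `𝔪` is the
ideal generated by the variables. The Hilbert function of the tangent cone is its difference
function. -/
noncomputable def hilbertSamuelFn (I : Ideal (MvPolynomial σ K)) (k : ℕ) : ℕ :=
  Module.finrank K (MvPolynomial σ K ⧸ (I ⊔ idealOfVars σ K ^ k).restrictScalars K)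

instance finite_quotient_sup_pow_idealOfVars [Finite σ] (I : Ideal (MvPolynomial σ K)) (k : ℕ) :
    Module.Finite K (MvPolynomial σ K ⧸ (I ⊔ idealOfVars σ K ^ k).restrictScalars K) :=
  Submodule.CoFG.of_le (Submodule.restrictScalars_mono K le_sup_right)
    (finite_quotient_pow_idealOfVars σ K k)

theorem hilbertSamuelFn_succ [Finite σ] (I : Ideal (MvPolynomial σ K)) (k : ℕ) :
    hilbertSamuelFn I (k + 1) = hilbertSamuelFn I k + hilbertFn (tangentConeIdeal I) k := by
  have : Module.Finite K (homogeneousSubmodule σ K k) := .of_fg (homogeneousSubmodule_fg σ K k)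
  have forms_inf : (tangentConeIdeal I).restrictScalars K ⊓ homogeneousSubmodule σ K k =
      (I ⊔ idealOfVars σ K ^ (k + 1)).restrictScalars K ⊓ homogeneousSubmodule σ K k := by
    ext f
    exact and_congr_left mem_tangentConeIdeal_iff_of_isHomogeneous
  rw [hilbertSamuelFn, hilbertSamuelFn, hilbertFn, forms_inf,
    ← sup_pow_succ_sup_homogeneousSubmodule I k]
  exact finrank_quotient_eq_finrank_quotient_sup_add _ _

end HilbertSamuel

section LastVarCoeffs

variable {n ℓ : ℕ} {R : Type*} [CommSemiring R]

/-- The polynomial `∑ r, g_r y ^ r` of degree less than `ℓ` in the last variable `y`, as a linear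
function of its coefficients `g_r`, which are polynomials in the other variables. -/
noncomputable def ofLastVarCoeffs (R : Type*) [CommSemiring R] (n ℓ : ℕ) :
    (Fin ℓ → MvPolynomial (Fin n) R) →ₗ[R] MvPolynomial (Fin (n + 1)) R where
  toFun g := ∑ r : Fin ℓ, X (Fin.last n) ^ (r : ℕ) * rename Fin.castSucc (g r)
  map_add' g h := by simp only [Pi.add_apply, map_add, mul_add, Finset.sum_add_distrib]
  map_smul' c g := by
    simp only [Pi.smul_apply, map_smul, mul_smul_comm, Finset.smul_sum, RingHom.id_apply]

theorem ofLastVarCoeffs_apply (g : Fin ℓ → MvPolynomial (Fin n) R) :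
    ofLastVarCoeffs R n ℓ g = ∑ r : Fin ℓ, X (Fin.last n) ^ (r : ℕ) * rename Fin.castSucc (g r) :=
  rfl

theorem ofLastVarCoeffs_single (r : Fin ℓ) (f : MvPolynomial (Fin n) R) :
    ofLastVarCoeffs R n ℓ (Pi.single r f) = X (Fin.last n) ^ (r : ℕ) * rename Fin.castSucc f := by
  rw [ofLastVarCoeffs_apply, Fintype.sum_eq_single r, Pi.single_eq_same]
  intro i hi
  rw [Pi.single_eq_of_ne hi, map_zero, mul_zero]

theorem ofLastVarCoeffs_mem_pow_idealOfVars {k : ℕ} {g : Fin ℓ → MvPolynomial (Fin n) R}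
    (hg : ∀ r : Fin ℓ, g r ∈ idealOfVars (Fin n) R ^ (k - r)) :
    ofLastVarCoeffs R n ℓ g ∈ idealOfVars (Fin (n + 1)) R ^ k := by
  rw [ofLastVarCoeffs_apply]
  refine sum_mem fun r _ => ?_
  have mul_mem := Ideal.mul_mem_mul
    (mem_pow_idealOfVars_of_isHomogeneous (isHomogeneous_X_pow (R := R) (Fin.last n) r))
    (rename_mem_pow_idealOfVars Fin.castSucc (hg r))
  rw [← pow_add] at mul_mem
  exact Ideal.pow_le_pow_right (by omega) mul_mem

theorem monomial_eq_X_last_pow_mul_rename (e : Fin (n + 1) →₀ ℕ) (c : R) :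
    monomial e c = X (Fin.last n) ^ e (Fin.last n) *
      rename Fin.castSucc (C c * ∏ i : Fin n, X i ^ e i.castSucc) := by
  rw [monomial_eq, Finsupp.prod_fintype _ _ fun _ => pow_zero _, Fin.prod_univ_castSucc]
  simp only [map_mul, map_prod, map_pow, rename_C, rename_X]
  ring

end LastVarCoeffs

section Extension

variable {n ℓ : ℕ} {R : Type*} [CommRing R] {I : Ideal (MvPolynomial (Fin n) R)}
  {J : Ideal (MvPolynomial (Fin (n + 1)) R)} {p : MvPolynomial (Fin n) R}

theorem X_last_pow_mul_rename_mem_sup (hℓ : 0 < ℓ) (hp : p ∈ idealOfVars (Fin n) R ^ ℓ)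
    (hpJ : X (Fin.last n) ^ ℓ - rename Fin.castSucc p ∈ J) {k a : ℕ} {q : MvPolynomial (Fin n) R}
    (hq : q ∈ idealOfVars (Fin n) R ^ (k - a)) :
    X (Fin.last n) ^ a * rename Fin.castSucc q ∈ J.restrictScalars R ⊔
      (Submodule.pi Set.univ fun r : Fin ℓ =>
        (idealOfVars (Fin n) R ^ (k - r)).restrictScalars R).map (ofLastVarCoeffs R n ℓ) := by
  -- Replacing `y ^ ℓ` by `p ∈ 𝔪 ^ ℓ` does not lower the order, so `y ^ a` may be reduced to
  -- `y ^ (a % ℓ)` modulo `J`.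
  let r : Fin ℓ := ⟨a % ℓ, a.mod_lt hℓ⟩
  have a_eq : ℓ * (a / ℓ) + a % ℓ = a := a.div_add_mod ℓ
  have reduction_mem : X (Fin.last n) ^ a * rename Fin.castSucc q -
      X (Fin.last n) ^ (a % ℓ) * rename Fin.castSucc (p ^ (a / ℓ) * q) ∈ J := by
    have pow_sub_mem := J.mem_of_dvd (sub_dvd_pow_sub_pow _ _ (a / ℓ)) hpJ
    convert! J.mul_mem_left (X (Fin.last n) ^ (a % ℓ) * rename Fin.castSucc q) pow_sub_mem using 1
    nth_rw 1 [← a_eq]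
    rw [map_mul, map_pow]
    ring
  have coeff_mem : p ^ (a / ℓ) * q ∈ idealOfVars (Fin n) R ^ (k - a % ℓ) := by
    have mul_mem := Ideal.mul_mem_mul (Ideal.pow_mem_pow hp (a / ℓ)) hq
    rw [← pow_mul, ← pow_add] at mul_mem
    exact Ideal.pow_le_pow_right (by omega) mul_mem
  refine Submodule.mem_sup.2 ⟨_, reduction_mem, _,
    ⟨Pi.single r (p ^ (a / ℓ) * q), ?_, ofLastVarCoeffs_single r _⟩, sub_add_cancel _ _⟩
  intro i _
  obtain rfl | hi := eq_or_ne i r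
  · rwa [Pi.single_eq_same]
  · rw [Pi.single_eq_of_ne hi]
    exact zero_mem _

theorem pow_idealOfVars_le_sup (hℓ : 0 < ℓ) (hp : p ∈ idealOfVars (Fin n) R ^ ℓ)
    (hpJ : X (Fin.last n) ^ ℓ - rename Fin.castSucc p ∈ J) (k : ℕ) :
    (idealOfVars (Fin (n + 1)) R ^ k).restrictScalars R ≤ J.restrictScalars R ⊔
      (Submodule.pi Set.univ fun r : Fin ℓ =>
        (idealOfVars (Fin n) R ^ (k - r)).restrictScalars R).map (ofLastVarCoeffs R n ℓ) := by
  intro f hf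
  rw [f.as_sum]
  refine sum_mem fun e he => ?_
  have degree_le : k ≤ (∑ i : Fin n, e i.castSucc) + e (Fin.last n) := by
    rw [← Fin.sum_univ_castSucc, ← Finsupp.degree_eq_sum]
    exact (mem_pow_idealOfVars_iff k f).1 hf e he
  have homogeneous : (C (coeff e f) * ∏ i : Fin n, X i ^ e i.castSucc).IsHomogeneous
      (∑ i : Fin n, e i.castSucc) :=
    (IsHomogeneous.prod _ _ _ fun i _ => isHomogeneous_X_pow i _).C_mul _
  rw [monomial_eq_X_last_pow_mul_rename]
  exact X_last_pow_mul_rename_mem_sup hℓ hp hpJ (Ideal.pow_le_pow_right (by omega)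
    (mem_pow_idealOfVars_of_isHomogeneous homogeneous))

theorem comap_ofLastVarCoeffs_sup_pow_idealOfVars (hℓ : 0 < ℓ)
    (hp : p ∈ idealOfVars (Fin n) R ^ ℓ) (hpJ : X (Fin.last n) ^ ℓ - rename Fin.castSucc p ∈ J)
    (hIJ : ∀ g, ofLastVarCoeffs R n ℓ g ∈ J ↔ ∀ r, g r ∈ I) (k : ℕ) :
    ((J ⊔ idealOfVars (Fin (n + 1)) R ^ k).restrictScalars R).comap (ofLastVarCoeffs R n ℓ) =
      Submodule.pi Set.univ fun r : Fin ℓ =>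
        (I ⊔ idealOfVars (Fin n) R ^ (k - r)).restrictScalars R := by
  apply le_antisymm
  · intro g hg r _
    obtain ⟨a, ha, b, hb, hab⟩ := Submodule.mem_sup.1 hg
    obtain ⟨a', ha', _, ⟨c, hc, rfl⟩, rfl⟩ :=
      Submodule.mem_sup.1 (pow_idealOfVars_le_sup hℓ hp hpJ k hb)
    have image_mem : ofLastVarCoeffs R n ℓ (g - c) ∈ J := by
      rw [map_sub, ← hab, ← add_assoc, add_sub_cancel_right]
      exact add_mem ha ha'
    rw [← sub_add_cancel g c]
    exact add_mem (Ideal.mem_sup_left ((hIJ _).1 image_mem r)) (Ideal.mem_sup_right (hc r trivial))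
  · intro g hg
    choose a ha b hb hab using fun r => Submodule.mem_sup.1 (hg r trivial)
    obtain rfl : a + b = g := funext hab
    rw [Submodule.mem_comap, map_add]
    exact add_mem (Ideal.mem_sup_left ((hIJ a).2 ha))
      (Ideal.mem_sup_right (ofLastVarCoeffs_mem_pow_idealOfVars hb))

end Extension

section HilbertFunctionOfExtension

variable {n ℓ : ℕ} {K : Type*} [Field K] {I : Ideal (MvPolynomial (Fin n) K)}
  {J : Ideal (MvPolynomial (Fin (n + 1)) K)} {p : MvPolynomial (Fin n) K}

theorem hilbertSamuelFn_extension (hℓ : 0 < ℓ) (hp : p ∈ idealOfVars (Fin n) K ^ ℓ)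
    (hpJ : X (Fin.last n) ^ ℓ - rename Fin.castSucc p ∈ J)
    (hIJ : ∀ g, ofLastVarCoeffs K n ℓ g ∈ J ↔ ∀ r, g r ∈ I) (k : ℕ) :
    hilbertSamuelFn J k = ∑ r : Fin ℓ, hilbertSamuelFn I (k - r) := by
  refine finrank_quotient_eq_sum_of_comap_eq_pi _ _ (ofLastVarCoeffs K n ℓ) ?_
    (comap_ofLastVarCoeffs_sup_pow_idealOfVars hℓ hp hpJ hIJ k)
  have sup_range : J.restrictScalars K ⊔ LinearMap.range (ofLastVarCoeffs K n ℓ) = ⊤ := by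
    rw [eq_top_iff]
    simpa [← LinearMap.range_eq_map] using! pow_idealOfVars_le_sup hℓ hp hpJ 0
  exact eq_top_mono (sup_le_sup_right (Submodule.restrictScalars_mono K le_sup_left) _) sup_range

theorem hilbertFn_tangentConeIdeal_extension (hℓ : 0 < ℓ) (hp : p ∈ idealOfVars (Fin n) K ^ ℓ)
    (hpJ : X (Fin.last n) ^ ℓ - rename Fin.castSucc p ∈ J)
    (hIJ : ∀ g, ofLastVarCoeffs K n ℓ g ∈ J ↔ ∀ r, g r ∈ I) (k : ℕ) :
    hilbertFn (tangentConeIdeal J) k =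
      ∑ i ∈ Finset.range (min (k + 1) ℓ), hilbertFn (tangentConeIdeal I) (k - i) := by
  have difference (i : ℕ) : hilbertSamuelFn I (k + 1 - i) =
      hilbertSamuelFn I (k - i) +
        if i < k + 1 then hilbertFn (tangentConeIdeal I) (k - i) else 0 := by
    split_ifs with hi
    · rw [show k + 1 - i = k - i + 1 by omega, hilbertSamuelFn_succ]
    · rw [show k + 1 - i = 0 by omega, show k - i = 0 by omega, add_zero]
  have filter_range : (Finset.range ℓ).filter (· < k + 1) = Finset.range (min (k + 1) ℓ) := by
    ext i
    simp only [Finset.mem_filter, Finset.mem_range, lt_min_iff, and_comm]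
  apply Nat.add_left_cancel (n := hilbertSamuelFn J k)
  rw [← hilbertSamuelFn_succ, hilbertSamuelFn_extension hℓ hp hpJ hIJ,
    hilbertSamuelFn_extension hℓ hp hpJ hIJ, ← filter_range, Finset.sum_filter,
    Fin.sum_univ_eq_sum_range (fun i => hilbertSamuelFn I (k + 1 - i)),
    Fin.sum_univ_eq_sum_range (fun i => hilbertSamuelFn I (k - i)), ← Finset.sum_add_distrib]
  exact Finset.sum_congr rfl fun i _ => difference i

end HilbertFunctionOfExtension

section ExpandKernel

variable {τ R : Type*} [CommSemiring R]

theorem sum_monomial_mul_expand_eq_zero_iff {ℓ : ℕ} (hℓ : 0 < ℓ) {u : τ →₀ ℕ} {j : τ}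
    (hj : Nat.gcd ℓ (u j) = 1) (q : Fin ℓ → MvPolynomial τ R) :
    ∑ r : Fin ℓ, monomial ((r : ℕ) • u) 1 * expand ℓ (q r) = 0 ↔ ∀ r, q r = 0 := by
  refine ⟨fun h r => ?_, fun h => by simp only [h, map_zero, mul_zero, Finset.sum_const_zero]⟩
  ext e
  have coeff_eq := congrArg (coeff ((r : ℕ) • u + ℓ • e)) h
  rw [coeff_sum, Fintype.sum_eq_single r, coeff_monomial_mul, one_mul,
    coeff_expand_smul _ hℓ.ne'] at coeff_eq
  · rw [coeff_eq, coeff_zero, coeff_zero]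
  intro i hi
  rw [coeff_monomial_mul']
  split_ifs with hle
  · rw [one_mul]
    refine coeff_expand_of_not_dvd (i := j) _ fun hdvd => hi ?_
    have modEq : i * u j ≡ r * u j + ℓ * e j [MOD ℓ] := (Nat.modEq_iff_dvd' (hle j)).2 hdvd
    exact Fin.ext (((modEq.trans (by simp [Nat.ModEq])).cancel_right_of_coprime hj).eq_of_lt_of_lt
      i.2 r.2)
  · rfl

theorem ofLastVarCoeffs_mem_ker_iff {n ℓ : ℕ} {u : τ →₀ ℕ} {j : τ} (hℓ : 0 < ℓ)
    (hj : Nat.gcd ℓ (u j) = 1) {φ : MvPolynomial (Fin n) R →ₐ[R] MvPolynomial τ R}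
    {ψ : MvPolynomial (Fin (n + 1)) R →ₐ[R] MvPolynomial τ R}
    (hψ : ψ.comp (rename Fin.castSucc) = (expand ℓ).comp φ)
    (hψ_last : ψ (X (Fin.last n)) = monomial u 1) (g : Fin ℓ → MvPolynomial (Fin n) R) :
    ofLastVarCoeffs R n ℓ g ∈ RingHom.ker ψ ↔ ∀ r, g r ∈ RingHom.ker φ := by
  have image : ψ (ofLastVarCoeffs R n ℓ g) =
      ∑ r : Fin ℓ, monomial ((r : ℕ) • u) 1 * expand ℓ (φ (g r)) := by
    rw [ofLastVarCoeffs_apply, map_sum]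
    refine Finset.sum_congr rfl fun r _ => ?_
    rw [map_mul, map_pow, hψ_last, monomial_pow, one_pow, ← AlgHom.comp_apply, hψ,
      AlgHom.comp_apply]
  simp only [RingHom.mem_ker]
  rw [image]
  exact sum_monomial_mul_expand_eq_zero_iff hℓ hj _

theorem hilbertFn_tangentConeIdeal_ker_extension {K : Type*} [Field K] {n ℓ : ℕ} {u : τ →₀ ℕ}
    {j : τ} (hℓ : 0 < ℓ) (hj : Nat.gcd ℓ (u j) = 1)
    {φ : MvPolynomial (Fin n) K →ₐ[K] MvPolynomial τ K}
    {ψ : MvPolynomial (Fin (n + 1)) K →ₐ[K] MvPolynomial τ K}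
    (hψ : ψ.comp (rename Fin.castSucc) = (expand ℓ).comp φ)
    (hψ_last : ψ (X (Fin.last n)) = monomial u 1) {p : MvPolynomial (Fin n) K}
    (hp : p ∈ idealOfVars (Fin n) K ^ ℓ) (hφp : φ p = monomial u 1) (k : ℕ) :
    hilbertFn (tangentConeIdeal (RingHom.ker ψ)) k =
      ∑ i ∈ Finset.range (min (k + 1) ℓ),
        hilbertFn (tangentConeIdeal (RingHom.ker φ)) (k - i) := by
  have relation : X (Fin.last n) ^ ℓ - rename Fin.castSucc p ∈ RingHom.ker ψ := by
    rw [RingHom.mem_ker, map_sub, map_pow, hψ_last, ← AlgHom.comp_apply, hψ, AlgHom.comp_apply,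
      hφp, expand_monomial, monomial_pow, one_pow, sub_self]
  exact hilbertFn_tangentConeIdeal_extension hℓ hp relation
    (ofLastVarCoeffs_mem_ker_iff hℓ hj hψ hψ_last) k

end ExpandKernel

theorem prod_X_pow_eq_monomial_equivFunOnFinite {σ R : Type*} [Fintype σ] [CommSemiring R]
    (a : σ → ℕ) :
    (∏ j, X j ^ a j : MvPolynomial σ R) = monomial (Finsupp.equivFunOnFinite.symm a) 1 := by
  rw [monomial_eq, Finsupp.prod_fintype _ _ fun _ => pow_zero _, C_1, one_mul,
    Finsupp.coe_equivFunOnFinite_symm]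

/-- For `ℓ ≤ s_1 + ⋯ + s_n` positive and coprime to some
component of `m = s_1 m_1 + ⋯ + s_n m_n`, the Hilbert functions of the tangent
cones satisfy `H_{(I_{S_{ℓ,m}})*}(k) = ∑_{i=0}^{min(k,ℓ−1)} H_{I_S*}(k−i)`
for every `k ∈ ℕ`. -/
theorem stmt_11 (K : Type*) [Field K] (d n : ℕ)
    (m : Fin n → Fin d → ℕ) (s : Fin n → ℕ) (ℓ : ℕ) (hℓ : 0 < ℓ)
    (hδ : ℓ ≤ ∑ i, s i)
    (hgcd : ∃ j : Fin d, Nat.gcd ℓ (∑ i, s i * m i j) = 1)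
    (φ : MvPolynomial (Fin n) K →ₐ[K] MvPolynomial (Fin d) K)
    (hφ : φ = aeval fun i : Fin n => ∏ j : Fin d, X j ^ m i j)
    (ψ : MvPolynomial (Fin (n + 1)) K →ₐ[K] MvPolynomial (Fin d) K)
    (hψ : ψ = aeval fun i : Fin (n + 1) =>
      Fin.lastCases (∏ j : Fin d, X j ^ (∑ i', s i' * m i' j))
        (fun i' : Fin n => ∏ j : Fin d, X j ^ (ℓ * m i' j)) i) :
    ∀ k : ℕ, hilbertFn (tangentConeIdeal (RingHom.ker ψ)) k =
      ∑ i ∈ Finset.range (min (k + 1) ℓ),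
        hilbertFn (tangentConeIdeal (RingHom.ker φ)) (k - i) := by
  intro k
  obtain ⟨j, hj⟩ := hgcd
  have hψ_castSucc : ψ.comp (rename Fin.castSucc) = (expand ℓ).comp φ := by
    ext1 i
    simp only [hφ, hψ, AlgHom.comp_apply, rename_X, aeval_X, Fin.lastCases_castSucc, map_prod,
      map_pow, expand_X, pow_mul]
  have hψ_last : ψ (X (Fin.last n)) =
      monomial (Finsupp.equivFunOnFinite.symm fun j => ∑ i, s i * m i j) 1 := by
    rw [hψ, aeval_X, Fin.lastCases_last, prod_X_pow_eq_monomial_equivFunOnFinite]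
  have hφ_prod : φ (∏ i, X i ^ s i) =
      monomial (Finsupp.equivFunOnFinite.symm fun j => ∑ i, s i * m i j) 1 := by
    simp only [← prod_X_pow_eq_monomial_equivFunOnFinite, hφ, map_prod, map_pow, aeval_X,
      ← Finset.prod_pow, ← pow_mul, ← Finset.prod_pow_eq_pow_sum, mul_comm (s _)]
    exact Finset.prod_comm
  have prod_mem : ∏ i, X i ^ s i ∈ idealOfVars (Fin n) K ^ ℓ :=
    Ideal.pow_le_pow_right hδ (mem_pow_idealOfVars_of_isHomogeneous
      (IsHomogeneous.prod _ _ _ fun i _ => isHomogeneous_X_pow i _))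
  exact hilbertFn_tangentConeIdeal_ker_extension hℓ hj hψ_castSucc hψ_last prod_mem hφ_prod k
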